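/- The center of the braid group B_n (for n ≥ 3) is infinite cyclic, generated by the full twist z_n = (σ_1⋯σ_{n-1})^n. -/

import Mathlib

/-- The Artin braid relations on generators `σ_0, …, σ_{m-1}` (0-indexed). -/
def braidRels (m : ℕ) : Set (FreeGroup (Fin m)) :=
  {r | ∃ i j : Fin m,
      ((i : ℕ) + 1 = (j : ℕ) ∧
        r = FreeGroup.of i * FreeGroup.of j * FreeGroup.of i *
          (FreeGroup.of j * FreeGroup.of i * FreeGroup.of j)⁻¹) ∨
      ((i : ℕ) + 1 < (j : ℕ) ∧
        r = FreeGroup.of i * FreeGroup.of j * (FreeGroup.of j * FreeGroup.of i)⁻¹)}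

/-- The braid group on `n` strands. -/
abbrev BraidGroup (n : ℕ) := PresentedGroup (braidRels (n - 1))

/-- The generator `σ_{i+1}` of `B_n` (0-indexed); equals `1` out of range. -/
def braidGen (n i : ℕ) : BraidGroup n :=
  if h : i < n - 1 then PresentedGroup.of ⟨i, h⟩ else 1

/-- `ρ = σ_1 ⋯ σ_{n-1}`. -/
def braidRho (n : ℕ) : BraidGroup n := ((List.range (n - 1)).map (braidGen n)).prod

/-- The full twist `z_n = (σ_1 ⋯ σ_{n-1})^n`. -/
def fullTwist (n : ℕ) : BraidGroup n := braidRho n ^ n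


namespace BM

/-- Adjacency of generator indices. -/
def adj {m : ℕ} (i j : Fin m) : Prop := (i : ℕ) + 1 = j ∨ (j : ℕ) + 1 = i

/-- Far-apart generator indices. -/
def far {m : ℕ} (i j : Fin m) : Prop := (i : ℕ) + 1 < j ∨ (j : ℕ) + 1 < i

theorem tri {m : ℕ} (i j : Fin m) : i = j ∨ far i j ∨ adj i j := by
  unfold far adj; rw [Fin.ext_iff]; omega

theorem adj_symm {m : ℕ} {i j : Fin m} (h : adj i j) : adj j i := by
  unfold adj at *; omega

theorem far_symm {m : ℕ} {i j : Fin m} (h : far i j) : far j i := by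
  unfold far at *; omega

theorem adj_far {m : ℕ} {i j : Fin m} (h : adj i j) (h' : far i j) : False := by
  unfold far adj at *; omega

theorem adj_irrefl {m : ℕ} {i : Fin m} (h : adj i i) : False := by
  unfold adj at *; omega

theorem far_irrefl {m : ℕ} {i : Fin m} (h : far i i) : False := by
  unfold far at *; omega

theorem no_triangle {m : ℕ} {i j k : Fin m} (h : adj i j) (h' : adj j k) (h'' : adj i k) :
    False := by
  unfold adj at *; omega

/-- One elementary positive transformation of words. -/
inductive Step {m : ℕ} : List (Fin m) → List (Fin m) → Prop
  | cons (a : Fin m) {u v : List (Fin m)} : Step u v → Step (a :: u) (a :: v)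
  | braid (i j : Fin m) (w : List (Fin m)) : adj i j → Step (i :: j :: i :: w) (j :: i :: j :: w)
  | comm (i j : Fin m) (w : List (Fin m)) : far i j → Step (i :: j :: w) (j :: i :: w)

theorem Step.symm {m : ℕ} {u v : List (Fin m)} (h : Step u v) : Step v u := by
  induction h with
  | cons a _ ih => exact Step.cons a ih
  | braid i j w h => exact Step.braid j i w (adj_symm h)
  | comm i j w h => exact Step.comm j i w (far_symm h)

theorem Step.length {m : ℕ} {u v : List (Fin m)} (h : Step u v) : u.length = v.length := by
  induction h with
  | cons a _ ih => simp [ih]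
  | braid i j w h => simp
  | comm i j w h => simp

theorem Step.append_right {m : ℕ} {u v : List (Fin m)} (h : Step u v) (w : List (Fin m)) :
    Step (u ++ w) (v ++ w) := by
  induction h with
  | cons a _ ih => exact Step.cons a ih
  | braid i j w' h => exact Step.braid i j _ h
  | comm i j w' h => exact Step.comm i j _ h

theorem Step.append_left {m : ℕ} {u v : List (Fin m)} (h : Step u v) (w : List (Fin m)) :
    Step (w ++ u) (w ++ v) := by
  induction w with
  | nil => exact h
  | cons a _ ih => exact Step.cons a ih

/-- Positive equivalence. -/
def wordSetoid (m : ℕ) : Setoid (List (Fin m)) where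
  r := Relation.ReflTransGen Step
  iseqv := ⟨fun _ => Relation.ReflTransGen.refl,
    fun h => by
      induction h with
      | refl => exact Relation.ReflTransGen.refl
      | tail _ h ih => exact Relation.ReflTransGen.head h.symm ih,
    fun h h' => h.trans h'⟩

end BM

/-- The positive braid monoid with `m` generators. -/
def BM (m : ℕ) : Type := Quotient (BM.wordSetoid m)

namespace BM

variable {m : ℕ}

/-- class of a word -/
def mk (w : List (Fin m)) : BM m := Quotient.mk (wordSetoid m) w

theorem mk_eq {u v : List (Fin m)} : mk u = mk v ↔ Relation.ReflTransGen Step u v :=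
  Quotient.eq (r := wordSetoid m)

theorem mk_step {u v : List (Fin m)} (h : Step u v) : mk u = mk v :=
  mk_eq.2 (Relation.ReflTransGen.single h)

theorem mk_surj (x : BM m) : ∃ w, mk w = x := Quotient.exists_rep x

instance : Monoid (BM m) where
  mul := Quotient.map₂ (sa := wordSetoid m) (sb := wordSetoid m) (sc := wordSetoid m)
    (fun u v => u ++ v) (by
      intro a b hab c d hcd
      exact Relation.ReflTransGen.trans
        (Relation.ReflTransGen.lift (fun u => u ++ c) (fun _ _ h => Step.append_right h c) _ _ hab)
        (Relation.ReflTransGen.lift (fun u => b ++ u) (fun _ _ h => Step.append_left h b) _ _ hcd))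
  one := mk []
  mul_assoc := by
    rintro ⟨a⟩ ⟨b⟩ ⟨c⟩
    exact congrArg mk (List.append_assoc a b c)
  one_mul := by
    rintro ⟨a⟩
    rfl
  mul_one := by
    rintro ⟨a⟩
    exact congrArg mk (List.append_nil a)

theorem mk_append (u v : List (Fin m)) : mk (u ++ v) = mk u * mk v := rfl

theorem mk_nil : mk ([] : List (Fin m)) = 1 := rfl

/-- generators -/
def g (i : Fin m) : BM m := mk [i]

theorem mk_cons (i : Fin m) (u : List (Fin m)) : mk (i :: u) = g i * mk u := rfl

theorem g_comm {i j : Fin m} (h : far i j) : g i * g j = g j * g i :=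
  mk_step (Step.comm i j [] h)

theorem g_braid {i j : Fin m} (h : adj i j) : g i * (g j * g i) = g j * (g i * g j) :=
  mk_step (Step.braid i j [] h)

theorem g_comm' {i j : Fin m} (h : far i j) (x : BM m) : g i * (g j * x) = g j * (g i * x) := by
  rw [← mul_assoc, g_comm h, mul_assoc]

theorem g_braid' {i j : Fin m} (h : adj i j) (x : BM m) :
    g i * (g j * (g i * x)) = g j * (g i * (g j * x)) := by
  have := congrArg (· * x) (g_braid h)
  simpa only [mul_assoc] using this

/-- word length -/
def len : BM m → ℕ := Quotient.lift (s := wordSetoid m) List.length (by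
  intro a b h
  induction h with
  | refl => rfl
  | tail _ h ih => rw [ih, h.length])

theorem len_mk (w : List (Fin m)) : len (mk w) = w.length := rfl

theorem len_mul (x y : BM m) : len (x * y) = len x + len y := by
  obtain ⟨u, rfl⟩ := mk_surj x
  obtain ⟨v, rfl⟩ := mk_surj y
  rw [← mk_append, len_mk, len_mk, len_mk, List.length_append]

theorem len_one : len (1 : BM m) = 0 := rfl

theorem len_g (i : Fin m) : len (g i) = 1 := rfl

theorem cases_g (x : BM m) : x = 1 ∨ ∃ i y, x = g i * y := by
  obtain ⟨w, rfl⟩ := mk_surj x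
  cases w with
  | nil => exact Or.inl rfl
  | cons i w => exact Or.inr ⟨i, mk w, rfl⟩

theorem eq_one_of_len {x : BM m} (h : len x = 0) : x = 1 := by
  rcases cases_g x with h1 | ⟨i, y, rfl⟩
  · exact h1
  · rw [len_mul, len_g] at h; omega

theorem eq_g_of_len {x : BM m} (h : len x = 1) : ∃ i, x = g i := by
  rcases cases_g x with rfl | ⟨i, y, rfl⟩
  · rw [len_one] at h; omega
  · rw [len_mul, len_g] at h
    exact ⟨i, by rw [eq_one_of_len (x := y) (by omega), mul_one]⟩

/-- The Garside property for a pair of heads. -/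
def P (i j : Fin m) (x y : BM m) : Prop :=
  (i = j ∧ x = y) ∨ (far i j ∧ ∃ z, x = g j * z ∧ y = g i * z) ∨
  (adj i j ∧ ∃ z, x = g j * (g i * z) ∧ y = g i * (g j * z))

theorem P.symm {i j : Fin m} {x y : BM m} (h : P i j x y) : P j i y x := by
  rcases h with ⟨h, h'⟩ | ⟨h, z, h1, h2⟩ | ⟨h, z, h1, h2⟩
  · exact Or.inl ⟨h.symm, h'.symm⟩
  · exact Or.inr (Or.inl ⟨far_symm h, z, h2, h1⟩)
  · exact Or.inr (Or.inr ⟨adj_symm h, z, h2, h1⟩)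

theorem P.far {i j : Fin m} {x y : BM m} (h : P i j x y) (hf : far i j) :
    ∃ z, x = g j * z ∧ y = g i * z := by
  rcases h with ⟨rfl, _⟩ | ⟨_, h⟩ | ⟨h, _⟩
  · exact (far_irrefl hf).elim
  · exact h
  · exact (adj_far h hf).elim

theorem P.adj {i j : Fin m} {x y : BM m} (h : P i j x y) (hf : adj i j) :
    ∃ z, x = g j * (g i * z) ∧ y = g i * (g j * z) := by
  rcases h with ⟨rfl, _⟩ | ⟨h, _⟩ | ⟨_, h⟩
  · exact (adj_irrefl hf).elim
  · exact (adj_far hf h).elim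
  · exact h

theorem P.self {i : Fin m} {x y : BM m} (h : P i i x y) : x = y := by
  rcases h with ⟨_, h⟩ | ⟨h, _⟩ | ⟨h, _⟩
  · exact h
  · exact (far_irrefl h).elim
  · exact (adj_irrefl h).elim

/-- the induction hypothesis -/
def H (s : ℕ) : Prop := ∀ (i j : Fin m) (x y : BM m), len x < s → g i * x = g j * y → P i j x y

theorem P_trans_far_adj {s : ℕ} (hs : H (m := m) s) {i k j : Fin m} {x v y : BM m}
    (hv : len v ≤ s) (hik : BM.far i k) (hkj : BM.adj k j)
    (h1 : ∃ z, x = g k * z ∧ v = g i * z)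
    (h2 : ∃ z, v = g j * (g k * z) ∧ y = g k * (g j * z)) : P i j x y := by
  obtain ⟨z, rfl, rfl⟩ := h1
  obtain ⟨w, h, rfl⟩ := h2
  rw [len_mul, len_g] at hv
  have hl := congrArg len h
  simp only [len_mul, len_g] at hl
  have h3 := hs i j z _ (by omega) h
  rcases tri i j with rfl | hij | hij
  · exact (adj_far (adj_symm hkj) hik).elim
  · obtain ⟨t, rfl, h4⟩ := h3.far hij
    obtain ⟨r, rfl, rfl⟩ := (hs k i w t (by omega) h4).far (far_symm hik)
    refine Or.inr (Or.inl ⟨hij, g k * (g j * r), ?_, ?_⟩)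
    · rw [g_braid' hkj]
    · rw [g_comm' (far_symm hij), g_comm' (far_symm hik)]
  · obtain ⟨t, rfl, h4⟩ := h3.adj hij
    simp only [len_mul, len_g] at hl hv
    obtain ⟨p, rfl, h5⟩ := (hs k i w _ (by omega) h4).far (far_symm hik)
    simp only [len_mul, len_g] at hl
    obtain ⟨r, rfl, rfl⟩ := (hs j k t p (by omega) h5).adj (adj_symm hkj)
    refine Or.inr (Or.inr ⟨hij, g k * (g j * (g i * r)), ?_, ?_⟩)
    · rw [g_comm' hik, g_braid' hkj, g_braid' (adj_symm hij), g_comm' (far_symm hik)]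
    · rw [g_braid' (adj_symm hij), g_comm' (far_symm hik), g_comm' hik r, g_braid' hkj]

theorem P_trans {s : ℕ} (hs : H (m := m) s) {i k j : Fin m} {x v y : BM m}
    (hv : len v ≤ s) (h1 : P i k x v) (h2 : P k j v y) : P i j x y := by
  rcases tri i k with rfl | hik | hik
  · rw [h1.self]; exact h2
  · rcases tri k j with rfl | hkj | hkj
    · rw [← h2.self]; exact h1
    · obtain ⟨z, rfl, rfl⟩ := h1.far hik
      obtain ⟨w, h, rfl⟩ := h2.far hkj
      rw [len_mul, len_g] at hv
      have h3 := hs i j z _ (by omega) h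
      rcases h3 with ⟨rfl, rfl⟩ | ⟨hij, t, rfl, rfl⟩ | ⟨hij, t, rfl, rfl⟩
      · exact Or.inl ⟨rfl, rfl⟩
      · exact Or.inr (Or.inl ⟨hij, g k * t, g_comm' hkj _, g_comm' (far_symm hik) _⟩)
      · refine Or.inr (Or.inr ⟨hij, g k * t, ?_, ?_⟩)
        · rw [g_comm' hkj, g_comm' (far_symm hik)]
        · rw [g_comm' (far_symm hik), g_comm' hkj]
    · exact P_trans_far_adj hs hv hik hkj (h1.far hik) (h2.adj hkj)
  · rcases tri k j with rfl | hkj | hkj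
    · rw [← h2.self]; exact h1
    · exact (P_trans_far_adj hs hv (far_symm hkj) (adj_symm hik) (h2.symm.far (far_symm hkj))
        (h1.symm.adj (adj_symm hik))).symm
    · obtain ⟨z, rfl, rfl⟩ := h1.adj hik
      obtain ⟨w, h, rfl⟩ := h2.adj hkj
      have hl := congrArg len h
      simp only [len_mul, len_g] at hl hv
      have h3 := hs i j _ _ (by simp only [len_mul, len_g]; omega) h
      rcases tri i j with rfl | hij | hij
      · have h4 := (hs k k z w (by omega) h3.self).self
        rw [h4]
        exact Or.inl ⟨rfl, rfl⟩
      · obtain ⟨W, h4, h5⟩ := h3.far hij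
        obtain ⟨U, rfl, rfl⟩ := (hs k j z W (by omega) h4).adj hkj
        obtain ⟨U', rfl, h6⟩ := (hs k i w _ (by omega) h5).adj (adj_symm hik)
        simp only [len_mul, len_g] at hl hv
        have h7 := (hs k k _ _ (by simp only [len_mul, len_g]; omega) h6).self
        obtain ⟨T, rfl, rfl⟩ := (hs j i _ _ (by omega) h7).far (far_symm hij)
        refine Or.inr (Or.inl ⟨hij, g k * (g i * (g j * (g k * T))), ?_, ?_⟩)
        · rw [g_comm' hij, g_braid' hik, g_braid' hkj, g_comm' (far_symm hij)]
        · rw [g_comm' (far_symm hij), g_braid' (adj_symm hkj), g_braid' (adj_symm hik)]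
      · exact (no_triangle hik hkj hij).elim

theorem P_of_step {i j : Fin m} {u v : List (Fin m)} (h : Step (i :: u) (j :: v)) :
    P i j (mk u) (mk v) := by
  cases h with
  | cons a h => exact Or.inl ⟨rfl, mk_step h⟩
  | braid i j w h => exact Or.inr (Or.inr ⟨h, mk w, rfl, rfl⟩)
  | comm i j w h => exact Or.inr (Or.inl ⟨h, mk w, rfl, rfl⟩)

theorem H_all (s : ℕ) : H (m := m) s := by
  induction s with
  | zero => intro i j x y h; omega
  | succ s ih =>
    intro i j x y hx h
    obtain ⟨u, rfl⟩ := mk_surj x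
    obtain ⟨v, rfl⟩ := mk_surj y
    rw [← mk_cons, ← mk_cons, mk_eq] at h
    have key : ∀ w, Relation.ReflTransGen Step (i :: u) w →
        w.length = u.length + 1 ∧ ∀ j v, w = j :: v → P i j (mk u) (mk v) := by
      intro w hw
      induction hw with
      | refl =>
        refine ⟨rfl, ?_⟩
        intro j v h
        cases h
        exact Or.inl ⟨rfl, rfl⟩
      | @tail b c hb hc ihb =>
        refine ⟨by rw [← hc.length, ihb.1], ?_⟩
        rintro j v rfl
        cases b with
        | nil => simp at ihb
        | cons k b =>
          have h1 := ihb.2 k b rfl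
          have h2 := ihb.1
          rw [len_mk] at hx
          refine P_trans ih ?_ h1 (P_of_step hc)
          rw [len_mk]
          simp at h2
          omega
    exact (key _ h).2 j v rfl

theorem garside {i j : Fin m} {x y : BM m} (h : g i * x = g j * y) : P i j x y :=
  H_all (len x + 1) i j x y (Nat.lt_succ_self _) h

theorem mul_left_cancel' {a x y : BM m} (h : a * x = a * y) : x = y := by
  obtain ⟨u, rfl⟩ := mk_surj a
  induction u with
  | nil => simpa only [mk_nil, one_mul] using h
  | cons i u ih =>
    rw [mk_cons, mul_assoc, mul_assoc] at h
    exact ih (garside h).self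

theorem mul_dvd_mul_left_iff' {a x y : BM m} : a * x ∣ a * y ↔ x ∣ y := by
  constructor
  · rintro ⟨c, h⟩
    rw [mul_assoc] at h
    exact ⟨c, mul_left_cancel' h⟩
  · rintro ⟨c, rfl⟩
    exact ⟨c, (mul_assoc _ _ _).symm⟩

theorem g_inj {i j : Fin m} (h : g i = g j) : i = j := by
  have h1 : g i * 1 = g j * 1 := by rw [h]
  rcases garside h1 with h | ⟨_, z, h, _⟩ | ⟨_, z, h, _⟩
  · exact h.1
  all_goals
    have := congrArg len h
    simp only [len_mul, len_g, len_one] at this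
    omega

/-- lcm of two atoms, when distinct -/
theorem atom_lcm (i j : Fin m) : ∃ u v : BM m, g i * u = g j * v ∧
    ∀ x, g i ∣ x → g j ∣ x → g i * u ∣ x := by
  rcases tri i j with rfl | h | h
  · exact ⟨1, 1, rfl, fun x h _ => by rwa [mul_one]⟩
  · refine ⟨g j, g i, g_comm h, ?_⟩
    rintro _ ⟨a, rfl⟩ ⟨b, hb⟩
    obtain ⟨z, rfl, rfl⟩ := (garside hb).far h
    exact ⟨z, (mul_assoc _ _ _).symm⟩
  · refine ⟨g j * g i, g i * g j, g_braid h, ?_⟩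
    rintro _ ⟨a, rfl⟩ ⟨b, hb⟩
    obtain ⟨z, rfl, rfl⟩ := (garside hb).adj h
    exact ⟨z, by simp only [mul_assoc]⟩

theorem exists_lcm (s : ℕ) : ∀ (x a b : BM m), len x < s → a ∣ x → b ∣ x →
    ∃ l, ∀ y, l ∣ y ↔ a ∣ y ∧ b ∣ y := by
  induction s with
  | zero => intro x a b h; omega
  | succ s ih =>
    intro x a b hx ha hb
    rcases cases_g a with rfl | ⟨i, a, rfl⟩
    · exact ⟨b, fun y => by simp⟩
    rcases cases_g b with rfl | ⟨j, b, rfl⟩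
    · exact ⟨g i * a, fun y => by simp⟩
    obtain ⟨u, v, huv, hl⟩ := atom_lcm i j
    have hi : g i ∣ x := (Dvd.intro _ rfl).trans ha
    have hj : g j ∣ x := (Dvd.intro _ rfl).trans hb
    have hlx := hl x hi hj
    obtain ⟨x1, rfl⟩ := hi
    obtain ⟨x2, hx2⟩ := hj
    have hlx' := hlx
    rw [huv, hx2, mul_dvd_mul_left_iff'] at hlx'
    rw [mul_dvd_mul_left_iff'] at hlx ha
    rw [hx2, mul_dvd_mul_left_iff'] at hb
    have e1 := congrArg len hx2
    simp only [len_mul, len_g] at e1 hx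
    obtain ⟨p, hp⟩ := ih x1 a u (by omega) ha hlx
    obtain ⟨q, hq⟩ := ih x2 b v (by omega) hb hlx'
    have hpx := (hp _).2 ⟨ha, hlx⟩
    have hqx := (hq _).2 ⟨hb, hlx'⟩
    obtain ⟨p', rfl⟩ := ((hp p).1 dvd_rfl).2
    obtain ⟨q', rfl⟩ := ((hq q).1 dvd_rfl).2
    obtain ⟨x3, rfl⟩ := hlx
    rw [mul_dvd_mul_left_iff'] at hpx
    have hx3 : v * x3 = x2 := by
      rw [← mul_assoc, huv, mul_assoc] at hx2
      exact mul_left_cancel' hx2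
    rw [← hx3, mul_dvd_mul_left_iff'] at hqx
    simp only [len_mul] at hx
    obtain ⟨r, hr⟩ := ih x3 p' q' (by omega) hpx hqx
    refine ⟨g i * u * r, fun y => ⟨fun h => ?_, fun ⟨h1, h2⟩ => ?_⟩⟩
    · have hr' := (hr r).1 dvd_rfl
      constructor
      · refine dvd_trans ?_ h
        rw [mul_assoc, mul_dvd_mul_left_iff']
        exact ((hp _).1 (mul_dvd_mul_left_iff'.2 hr'.1)).1
      · refine dvd_trans ?_ h
        rw [huv, mul_assoc, mul_dvd_mul_left_iff']
        exact ((hq _).1 (mul_dvd_mul_left_iff'.2 hr'.2)).1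
    · have hly := hl y ((Dvd.intro _ rfl).trans h1) ((Dvd.intro _ rfl).trans h2)
      obtain ⟨y3, rfl⟩ := hly
      rw [mul_dvd_mul_left_iff']
      refine (hr y3).2 ⟨?_, ?_⟩
      · rw [← mul_dvd_mul_left_iff' (a := u)]
        rw [mul_assoc, mul_dvd_mul_left_iff'] at h1
        exact (hp _).2 ⟨h1, Dvd.intro _ rfl⟩
      · rw [← mul_dvd_mul_left_iff' (a := v)]
        rw [huv, mul_assoc, mul_dvd_mul_left_iff'] at h2
        exact (hq _).2 ⟨h2, Dvd.intro _ rfl⟩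

theorem exists_delta {Z : BM m} (hZ : ∀ i, g i ∣ Z) :
    ∃ D : BM m, ∀ y, D ∣ y ↔ ∀ i, g i ∣ y := by
  have key : ∀ s : Finset (Fin m), ∃ D : BM m, ∀ y, D ∣ y ↔ ∀ i ∈ s, g i ∣ y := by
    intro s
    induction s using Finset.induction_on with
    | empty => exact ⟨1, fun y => by simp⟩
    | insert a s _ ih =>
      obtain ⟨D, hD⟩ := ih
      obtain ⟨l, hl⟩ := exists_lcm (len Z + 1) Z (g a) D (Nat.lt_succ_self _) (hZ a)
        ((hD Z).2 fun i _ => hZ i)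
      refine ⟨l, fun y => ?_⟩
      rw [hl, hD]
      simp
  obtain ⟨D, hD⟩ := key Finset.univ
  exact ⟨D, fun y => by rw [hD]; simp⟩

end BM

namespace BM

section Rho

variable {N : Type*} [Monoid N] (s : ℕ → N)

/-- partial products -/
def pr (k : ℕ) : N := ((List.range k).map s).prod

theorem pr_succ (k : ℕ) : pr s (k + 1) = pr s k * s k := by
  simp [pr, List.range_succ]

theorem pr_zero : pr s 0 = 1 := rfl

theorem pr_succ' (k : ℕ) : pr s (k + 1) = s 0 * pr (fun i => s (i + 1)) k := by
  simp [pr, List.range_succ_eq_map, Function.comp_def]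

variable {s} {m : ℕ}

theorem pr_comm (hc : ∀ i j, i + 1 < j → j < m → s i * s j = s j * s i)
    (k j : ℕ) (hk : k < j) (hj : j < m) : pr s k * s j = s j * pr s k := by
  induction k with
  | zero => simp [pr_zero]
  | succ k ih =>
    rw [pr_succ, mul_assoc, hc k j (by omega) hj, ← mul_assoc, ih (by omega), mul_assoc]

theorem pr_shift (hc : ∀ i j, i + 1 < j → j < m → s i * s j = s j * s i)
    (hb : ∀ i, i + 1 < m → s i * (s (i + 1) * s i) = s (i + 1) * (s i * s (i + 1)))
    (k i : ℕ) (hi : i + 1 < k) (hk : k ≤ m) :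
    pr s k * s i = s (i + 1) * pr s k := by
  induction k with
  | zero => omega
  | succ k ih =>
    by_cases h : i + 1 < k
    · rw [pr_succ, mul_assoc, ← hc i k h (by omega), ← mul_assoc, ih h (by omega), mul_assoc]
    · obtain rfl : k = i + 1 := by omega
      rw [pr_succ, pr_succ, mul_assoc, mul_assoc, hb i (by omega), ← mul_assoc,
        pr_comm hc i (i + 1) (by omega) (by omega), mul_assoc, mul_assoc]

theorem pr_pr (hc : ∀ i j, i + 1 < j → j < m → s i * s j = s j * s i)
    (hb : ∀ i, i + 1 < m → s i * (s (i + 1) * s i) = s (i + 1) * (s i * s (i + 1)))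
    (k : ℕ) (hk : k + 1 ≤ m) :
    pr s m * pr s k = pr (fun i => s (i + 1)) k * pr s m := by
  induction k with
  | zero => simp [pr_zero]
  | succ k ih =>
    rw [pr_succ, pr_succ, ← mul_assoc, ih (by omega), mul_assoc, pr_shift hc hb m k (by omega) le_rfl,
      mul_assoc]

theorem pr_sq (hc : ∀ i j, i + 1 < j → j < m → s i * s j = s j * s i)
    (hb : ∀ i, i + 1 < m → s i * (s (i + 1) * s i) = s (i + 1) * (s i * s (i + 1)))
    (k : ℕ) (hk : k + 1 = m) : s 0 * pr s m ^ 2 = pr s m ^ 2 * s k := by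
  have h1 := pr_pr hc hb k (by omega)
  calc s 0 * pr s m ^ 2 = s 0 * (pr s m * pr s (k + 1)) := by rw [hk, sq]
    _ = s 0 * (pr s m * pr s k * s k) := by rw [pr_succ, mul_assoc]
    _ = s 0 * pr (fun i => s (i + 1)) k * (pr s m * s k) := by rw [h1]; simp only [mul_assoc]
    _ = pr s m ^ 2 * s k := by rw [← pr_succ', hk, sq, mul_assoc]

theorem pr_pow_shift (hc : ∀ i j, i + 1 < j → j < m → s i * s j = s j * s i)
    (hb : ∀ i, i + 1 < m → s i * (s (i + 1) * s i) = s (i + 1) * (s i * s (i + 1)))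
    (d i : ℕ) (hi : i + d < m) :
    pr s m ^ d * s i = s (i + d) * pr s m ^ d := by
  induction d with
  | zero => simp
  | succ d ih =>
    rw [pow_succ', mul_assoc, ih (by omega), ← mul_assoc, pr_shift hc hb m (i + d) (by omega) le_rfl,
      mul_assoc]
    rfl

theorem pr_central (hc : ∀ i j, i + 1 < j → j < m → s i * s j = s j * s i)
    (hb : ∀ i, i + 1 < m → s i * (s (i + 1) * s i) = s (i + 1) * (s i * s (i + 1)))
    (i : ℕ) (hi : i < m) :
    pr s m ^ (m + 1) * s i = s i * pr s m ^ (m + 1) := by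
  obtain ⟨k, rfl⟩ : ∃ k, k + 1 = m := ⟨m - 1, by omega⟩
  obtain ⟨d, rfl⟩ : ∃ d, k = i + d := ⟨k - i, by omega⟩
  have e : i + d + 1 + 1 = i + (2 + d) := by omega
  have h1 := pr_pow_shift hc hb d i (by omega)
  have h2 := pr_pow_shift hc hb i 0 (by omega)
  have h3 := pr_sq hc hb (i + d) rfl
  rw [zero_add] at h2
  rw [e, pow_add, pow_add, mul_assoc, mul_assoc, h1, ← mul_assoc (_ ^ 2), ← h3, mul_assoc,
    ← mul_assoc, h2, mul_assoc]

theorem pr_dvd (hc : ∀ i j, i + 1 < j → j < m → s i * s j = s j * s i)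
    (hb : ∀ i, i + 1 < m → s i * (s (i + 1) * s i) = s (i + 1) * (s i * s (i + 1)))
    (i : ℕ) (hi : i < m) : s i ∣ pr s m ^ (m + 1) := by
  obtain ⟨k, rfl⟩ : ∃ k, k + 1 = m := ⟨m - 1, by omega⟩
  have h2 := pr_pow_shift hc hb i 0 (by omega)
  rw [zero_add] at h2
  refine dvd_trans ?_ (pow_dvd_pow _ (show i + 1 ≤ k + 1 + 1 by omega))
  rw [pow_succ]
  nth_rewrite 2 [pr_succ']
  rw [← mul_assoc, h2, mul_assoc]
  exact Dvd.intro _ rfl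

end Rho

variable {m : ℕ}

/-- generators indexed by naturals -/
def gn (m i : ℕ) : BM m := if h : i < m then g ⟨i, h⟩ else 1

theorem gn_val (i : Fin m) : gn m i = g i := by simp [gn]

theorem gn_comm (i j : ℕ) (h : i + 1 < j) (hj : j < m) : gn m i * gn m j = gn m j * gn m i := by
  have hi : i < m := by omega
  simp only [gn, hi, hj, dif_pos]
  exact g_comm (Or.inl h)

theorem gn_braid (i : ℕ) (h : i + 1 < m) :
    gn m i * (gn m (i + 1) * gn m i) = gn m (i + 1) * (gn m i * gn m (i + 1)) := by
  have hi : i < m := by omega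
  simp only [gn, hi, h, dif_pos]
  exact g_braid (Or.inl rfl)

/-- full twist in the monoid -/
def Z (m : ℕ) : BM m := pr (gn m) m ^ (m + 1)

theorem Z_g (i : Fin m) : Z m * g i = g i * Z m := by
  rw [← gn_val]
  exact pr_central gn_comm gn_braid i i.2

theorem g_dvd_Z (i : Fin m) : g i ∣ Z m := by
  rw [← gn_val]
  exact pr_dvd gn_comm gn_braid i i.2

theorem Z_comm (x : BM m) : Z m * x = x * Z m := by
  obtain ⟨w, rfl⟩ := mk_surj x
  induction w with
  | nil => simp [mk_nil]
  | cons i w ih => rw [mk_cons, ← mul_assoc, Z_g, mul_assoc, ih, mul_assoc]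

/-- quasi-central elements -/
def Q (y : BM m) : Prop := ∀ k, ∃ j, g k * y = y * g j

theorem conn (p : Fin m → Prop) (h : ∀ i j, adj i j → p i → p j) (i : Fin m) (hi : p i) :
    ∀ j, p j := by
  have up : ∀ d : ℕ, ∀ i : Fin m, p i → ∀ j : Fin m, (j : ℕ) = i + d → p j := by
    intro d
    induction d with
    | zero => intro i hi j hj; rwa [show j = i from Fin.ext hj]
    | succ d ih =>
      intro i hi j hj
      exact ih ⟨i + 1, by omega⟩ (h i _ (Or.inl rfl) hi) j (by simp; omega)
  have down : ∀ d : ℕ, ∀ i : Fin m, p i → ∀ j : Fin m, (i : ℕ) = j + d → p j := by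
    intro d
    induction d with
    | zero => intro i hi j hj; rwa [show j = i from Fin.ext hj.symm]
    | succ d ih =>
      intro i hi j hj
      exact ih ⟨j + d, by omega⟩ (h i _ (Or.inr (by simp; omega)) hi) j rfl
  intro j
  rcases le_total (i : ℕ) j with hij | hij
  · exact up (j - i) i hi j (by omega)
  · exact down (i - j) i hi j (by omega)

theorem Q_all {y : BM m} (hy : Q y) (i : Fin m) (hi : g i ∣ y) : ∀ j, g j ∣ y := by
  refine conn (fun i => g i ∣ y) ?_ i hi
  intro i k hik hi
  obtain ⟨j, hj⟩ := hy k
  obtain ⟨a, ha⟩ : g i ∣ g k * y := by rw [hj]; exact hi.trans (Dvd.intro _ rfl)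
  obtain ⟨w, _, hw⟩ := (garside ha.symm).adj hik
  obtain ⟨j', hj'⟩ := hy i
  rw [hw, mul_assoc, mul_assoc] at hj'
  have := mul_left_cancel' hj'
  rw [← hw] at this
  exact ⟨_, this⟩

theorem Q_pow {D : BM m} (hm : 0 < m) (hD : ∀ y, D ∣ y ↔ ∀ i, g i ∣ y) (s : ℕ) :
    ∀ y : BM m, len y < s → Q y → ∃ k, y = D ^ k := by
  have hgD := (hD D).1 dvd_rfl
  have h1 : ∀ i, ∃ j, g i * D = D * g j := by
    intro i
    have h : D ∣ g i * D := by
      rw [hD]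
      intro j
      rcases tri i j with rfl | hij | hij
      · exact Dvd.intro _ rfl
      · obtain ⟨w, hw⟩ := hgD j
        rw [hw, g_comm' hij]
        exact Dvd.intro _ rfl
      · obtain ⟨a, ha⟩ := hgD i
        obtain ⟨b, hb⟩ := hgD j
        obtain ⟨w, rfl, rfl⟩ := (garside (ha.symm.trans hb)).adj hij
        rw [hb, g_braid' hij]
        exact Dvd.intro _ rfl
    obtain ⟨c, hc⟩ := h
    have hl := congrArg len hc
    simp only [len_mul, len_g] at hl
    obtain ⟨j, rfl⟩ := eq_g_of_len (x := c) (by omega)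
    exact ⟨j, hc⟩
  choose τ hτ using h1
  have hinj : Function.Injective τ := by
    intro i j hij
    obtain ⟨w, hw⟩ := (hD (Z m)).2 g_dvd_Z
    have : g i * Z m = g j * Z m := by
      rw [hw, ← mul_assoc, ← mul_assoc, hτ, hτ, hij]
    rw [← Z_comm, ← Z_comm] at this
    exact g_inj (mul_left_cancel' this)
  have hsurj := Finite.surjective_of_injective hinj
  induction s with
  | zero => intro y h; omega
  | succ s ih =>
    intro y hs hy
    rcases cases_g y with rfl | ⟨i, y, rfl⟩
    · exact ⟨0, (pow_zero D).symm⟩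
    obtain ⟨w, hw⟩ := (hD _).2 (Q_all hy i (Dvd.intro _ rfl))
    obtain ⟨w', hw'⟩ := hgD ⟨0, hm⟩
    have hl := congrArg len hw
    have hl' := congrArg len hw'
    rw [len_mul D] at hl
    rw [len_mul, len_g] at hl'
    rw [hw] at hy
    obtain ⟨k, rfl⟩ := ih w (by omega) (by
      intro k
      obtain ⟨k, rfl⟩ := hsurj k
      obtain ⟨j, hj⟩ := hy k
      rw [← mul_assoc, hτ, mul_assoc, mul_assoc] at hj
      exact ⟨j, mul_left_cancel' hj⟩)
    exact ⟨k + 1, by rw [hw, pow_succ']⟩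

def lift {N : Type*} [Monoid N] (f : Fin m → N) (hc : ∀ i j, far i j → f i * f j = f j * f i)
    (hb : ∀ i j, adj i j → f i * (f j * f i) = f j * (f i * f j)) : BM m →* N where
  toFun := Quotient.lift (s := wordSetoid m) (fun w => (w.map f).prod) (by
    intro a b h
    induction h with
    | refl => rfl
    | tail _ h ih =>
      refine ih.trans ?_
      rename_i hr
      clear ih hr
      induction h with
      | cons a _ ih => simp only [List.map_cons, List.prod_cons, ih]
      | braid i j w h =>
        have := congrArg (· * (w.map f).prod) (hb i j h)
        simpa [mul_assoc] using this
      | comm i j w h =>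
        have := congrArg (· * (w.map f).prod) (hc i j h)
        simpa [mul_assoc] using this)
  map_one' := rfl
  map_mul' := by
    rintro ⟨a⟩ ⟨b⟩
    show ((a ++ b).map f).prod = (a.map f).prod * (b.map f).prod
    simp

theorem lift_g {N : Type*} [Monoid N] (f : Fin m → N)
    (hc : ∀ i j, far i j → f i * f j = f j * f i)
    (hb : ∀ i j, adj i j → f i * (f j * f i) = f j * (f i * f j)) (i : Fin m) :
    lift f hc hb (g i) = f i := by
  show ([i].map f).prod = f i
  simp

theorem hom_ext {N : Type*} [Monoid N] {φ ψ : BM m →* N} (h : ∀ i, φ (g i) = ψ (g i)) : φ = ψ := by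
  ext x
  obtain ⟨w, rfl⟩ := mk_surj x
  induction w with
  | nil => simp [mk_nil]
  | cons i w ih => rw [mk_cons, map_mul, map_mul, h, ih]

/-- braid group with `m` generators -/
abbrev BG (m : ℕ) := PresentedGroup (braidRels m)

/-- its generators -/
abbrev sg (i : Fin m) : BG m := PresentedGroup.of i

theorem sg_comm_lt {i j : Fin m} (h : (i : ℕ) + 1 < j) : sg i * sg j = sg j * sg i := by
  have : PresentedGroup.mk (braidRels m)
      (FreeGroup.of i * FreeGroup.of j * (FreeGroup.of j * FreeGroup.of i)⁻¹) = 1 :=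
    PresentedGroup.one_of_mem ⟨i, j, Or.inr ⟨h, rfl⟩⟩
  rw [map_mul, map_inv, mul_inv_eq_one, map_mul, map_mul] at this
  exact this

theorem sg_braid_lt {i j : Fin m} (h : (i : ℕ) + 1 = j) :
    sg i * (sg j * sg i) = sg j * (sg i * sg j) := by
  have : PresentedGroup.mk (braidRels m)
      (FreeGroup.of i * FreeGroup.of j * FreeGroup.of i *
          (FreeGroup.of j * FreeGroup.of i * FreeGroup.of j)⁻¹) = 1 :=
    PresentedGroup.one_of_mem ⟨i, j, Or.inl ⟨h, rfl⟩⟩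
  rw [map_mul, map_inv, mul_inv_eq_one] at this
  simp only [map_mul] at this
  rw [← mul_assoc, ← mul_assoc]
  exact this

theorem rels_one {H : Type*} [Group H] (f : Fin m → H)
    (hc : ∀ i j : Fin m, (i : ℕ) + 1 < j → f i * f j = f j * f i)
    (hb : ∀ i j : Fin m, (i : ℕ) + 1 = j → f i * (f j * f i) = f j * (f i * f j)) :
    ∀ r ∈ braidRels m, FreeGroup.lift f r = 1 := by
  rintro r ⟨i, j, ⟨h, rfl⟩ | ⟨h, rfl⟩⟩
  · rw [map_mul, map_inv, mul_inv_eq_one]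
    simpa [mul_assoc] using hb i j h
  · rw [map_mul, map_inv, mul_inv_eq_one]
    simpa using hc i j h

/-- The canonical map to the group. -/
def toG (m : ℕ) : BM m →* BG m := lift sg
  (fun i j h => by
    rcases h with h | h
    · exact sg_comm_lt h
    · exact (sg_comm_lt h).symm)
  (fun i j h => by
    rcases h with h | h
    · exact sg_braid_lt h
    · exact (sg_braid_lt h).symm)

theorem toG_g (i : Fin m) : toG m (g i) = sg i := lift_g _ _ _ i

instance : OreLocalization.OreSet (Submonoid.powers (Z m)) where
  ore_right_cancel r₁ r₂ s h := by
    refine ⟨s, ?_⟩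
    obtain ⟨s, k, rfl⟩ := s
    have hZ : ∀ x : BM m, Z m ^ k * x = x * Z m ^ k := fun x =>
      (Commute.pow_left (show Commute (Z m) x from Z_comm x) k)
    simp only at h ⊢
    rw [hZ, hZ, h]
  oreNum r _ := r
  oreDenom _ s := s
  ore_eq r s := by
    obtain ⟨s, k, rfl⟩ := s
    exact Commute.pow_left (show Commute (Z m) r from Z_comm r) k

theorem toG_injective : Function.Injective (toG m) := by
  let L := OreLocalization (Submonoid.powers (Z m)) (BM m)
  let ι : BM m →* L := OreLocalization.numeratorHom
  have hι : Function.Injective ι := by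
    intro x y h
    obtain ⟨u, v, h1, h2⟩ := OreLocalization.oreDiv_eq_iff.1 h
    simp only [Submonoid.coe_one, mul_one] at h2
    rw [Submonoid.smul_def, smul_eq_mul, smul_eq_mul, ← h2] at h1
    exact (mul_left_cancel' h1).symm
  have hZ : IsUnit (ι (Z m)) :=
    OreLocalization.numerator_isUnit (⟨Z m, Submonoid.mem_powers _⟩ : Submonoid.powers (Z m))
  have hu : ∀ i, IsUnit (ι (g i)) := by
    intro i
    obtain ⟨w, hw⟩ := g_dvd_Z i
    have hw' : w * g i = Z m := by
      apply mul_left_cancel' (a := g i)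
      rw [← mul_assoc, ← hw, Z_g]
    rw [isUnit_iff_exists_and_exists]
    obtain ⟨q, hq⟩ := hZ
    refine ⟨⟨ι w * ↑q⁻¹, ?_⟩, ⟨↑q⁻¹ * ι w, ?_⟩⟩
    · rw [← mul_assoc, ← map_mul, ← hw, ← hq, Units.mul_inv]
    · rw [mul_assoc, ← map_mul, hw', ← hq, Units.inv_mul]
  choose u hu using hu
  have hr := rels_one u
    (fun i j h => by
      ext
      simp only [Units.val_mul, hu, ← map_mul]
      rw [g_comm (Or.inl h)])
    (fun i j h => by
      ext
      simp only [Units.val_mul, hu, ← map_mul]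
      rw [g_braid (Or.inl h)])
  have hcomp : ((Units.coeHom L).comp (PresentedGroup.toGroup hr)).comp (toG m) = ι := by
    apply hom_ext
    intro i
    simp only [MonoidHom.comp_apply, toG_g]
    rw [PresentedGroup.toGroup.of]
    exact hu i
  apply Function.Injective.of_comp (f := ((Units.coeHom L).comp (PresentedGroup.toGroup hr)))
  rw [← MonoidHom.coe_comp, hcomp]
  exact hι

theorem zG_comm (x : BG m) : toG m (Z m) * x = x * toG m (Z m) := by
  have h : x ∈ Subgroup.centralizer {toG m (Z m)} := by
    refine PresentedGroup.generated_by _ _ ?_ x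
    intro i
    rw [Subgroup.mem_centralizer_singleton_iff]
    have := congrArg (toG m) (Z_g i)
    rw [map_mul, map_mul, toG_g] at this
    exact this.symm
  rw [Subgroup.mem_centralizer_singleton_iff] at h
  exact h.symm

theorem exists_pos (x : BG m) : ∃ (k : ℕ) (a : BM m), x * toG m (Z m) ^ k = toG m a := by
  have hx : x ∈ Subgroup.closure (Set.range (PresentedGroup.of (rels := braidRels m))) := by
    rw [PresentedGroup.closure_range_of]; trivial
  induction hx using Subgroup.closure_induction_left with
  | one => exact ⟨0, 1, by simp⟩
  | mul_left x hx y hy ih =>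
    obtain ⟨i, rfl⟩ := hx
    obtain ⟨k, a, h⟩ := ih
    exact ⟨k, g i * a, by rw [mul_assoc, h, map_mul, toG_g]⟩
  | inv_mul_cancel x hx y hy ih =>
    obtain ⟨i, rfl⟩ := hx
    obtain ⟨k, a, h⟩ := ih
    obtain ⟨w, hw⟩ := g_dvd_Z i
    refine ⟨k + 1, w * a, ?_⟩
    rw [pow_succ, ← mul_assoc, mul_assoc _ y, h, mul_assoc, ← zG_comm, hw, map_mul, toG_g, map_mul]
    group

theorem center_le (hm : 0 < m) : ∃ d : BG m, Subgroup.center (BG m) ≤ Subgroup.zpowers d := by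
  obtain ⟨D, hD⟩ := exists_delta (m := m) g_dvd_Z
  have hQ : ∀ y : BM m, (∀ k, g k * y = y * g k) → ∃ k, y = D ^ k :=
    fun y hy => Q_pow hm hD (len y + 1) y (Nat.lt_succ_self _) (fun k => ⟨k, hy k⟩)
  obtain ⟨l, hl⟩ := hQ (Z m) (fun k => (Z_g k).symm)
  refine ⟨toG m D, fun c hc => ?_⟩
  rw [Subgroup.mem_center_iff] at hc
  obtain ⟨k, a, ha⟩ := exists_pos c
  obtain ⟨k', rfl⟩ := hQ a (by
    intro i
    apply toG_injective
    rw [map_mul, map_mul, ← ha, ← mul_assoc, hc, mul_assoc, mul_assoc]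
    congr 1
    exact ((show Commute (toG m (Z m)) (toG m (g i)) from zG_comm _).pow_left k).symm)
  rw [hl] at ha
  rw [eq_mul_inv_of_mul_eq ha, map_pow, map_pow]
  have hd := Subgroup.mem_zpowers (toG m D)
  exact mul_mem (pow_mem hd _) (inv_mem (pow_mem (pow_mem hd _) _))

end BM

namespace BM

/-- adjacent transposition of naturals -/
def sw (i a : ℕ) : ℕ := if a = i then i + 1 else if a = i + 1 then i else a

theorem sw_sw (i a : ℕ) : sw i (sw i a) = a := by
  unfold sw; split_ifs <;> omega

theorem sw_comm (i j a : ℕ) (h : i + 1 < j) : sw i (sw j a) = sw j (sw i a) := by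
  unfold sw; split_ifs <;> omega

theorem sw_braid (i a : ℕ) :
    sw i (sw (i + 1) (sw i a)) = sw (i + 1) (sw i (sw (i + 1) a)) := by
  unfold sw; split_ifs <;> omega

/-- crossing counter -/
def cr (i a b : ℕ) : ℤ := if a = i ∧ b = i + 1 then 1 else 0

theorem cr_comm (i j a b : ℕ) (h : i + 1 < j) :
    cr j a b + cr i (sw j a) (sw j b) = cr i a b + cr j (sw i a) (sw i b) := by
  have h1 : cr i (sw j a) (sw j b) = cr i a b := by
    unfold cr sw
    congr 1
    apply propext
    constructor <;> rintro ⟨h1, h2⟩ <;> split_ifs at * <;> omega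
  have h2 : cr j (sw i a) (sw i b) = cr j a b := by
    unfold cr sw
    congr 1
    apply propext
    constructor <;> rintro ⟨h1, h2⟩ <;> split_ifs at * <;> omega
  rw [h1, h2, add_comm]

theorem cr_braid (i a b : ℕ) :
    cr i a b + cr (i + 1) (sw i a) (sw i b)
      + cr i (sw (i + 1) (sw i a)) (sw (i + 1) (sw i b)) =
    cr (i + 1) a b + cr i (sw (i + 1) a) (sw (i + 1) b)
      + cr (i + 1) (sw i (sw (i + 1) a)) (sw i (sw (i + 1) b)) := by
  have key : ∀ a : ℕ, a = i ∨ a = i + 1 ∨ a = i + 2 ∨ (a ≠ i ∧ a ≠ i + 1 ∧ a ≠ i + 2) := by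
    intro a; omega
  rcases key a with rfl | rfl | rfl | ⟨h1, h2, h3⟩ <;>
  rcases key b with h | h | h | ⟨h4, h5, h6⟩ <;>
  simp_all [cr, sw, add_assoc]

/-- action of a generator on pairs of positions with a counter -/
def act (i : ℕ) : Equiv.Perm (ℕ × ℕ × ℤ) where
  toFun p := (sw i p.1, sw i p.2.1, p.2.2 + cr i p.1 p.2.1)
  invFun p := (sw i p.1, sw i p.2.1, p.2.2 - cr i (sw i p.1) (sw i p.2.1))
  left_inv p := by simp [sw_sw]
  right_inv p := by simp [sw_sw]

theorem act_apply (i a b : ℕ) (t : ℤ) :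
    act i (a, b, t) = (sw i a, sw i b, t + cr i a b) := rfl

variable {m : ℕ}

theorem act_rels : ∀ r ∈ braidRels m, FreeGroup.lift (fun i : Fin m => act i) r = 1 := by
  refine rels_one _ ?_ ?_
  · intro i j h
    ext1 ⟨a, b, t⟩
    simp only [Equiv.Perm.mul_apply, act_apply, add_assoc]
    rw [sw_comm _ _ _ h, sw_comm _ _ _ h, cr_comm _ _ _ _ h]
  · intro i j h
    ext1 ⟨a, b, t⟩
    rw [← h]
    have := cr_braid i a b
    simp only [Equiv.Perm.mul_apply, act_apply, Prod.mk.injEq]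
    refine ⟨sw_braid _ _, sw_braid _ _, by linarith⟩

/-- action of the braid group -/
def ψ (m : ℕ) : BG m →* Equiv.Perm (ℕ × ℕ × ℤ) := PresentedGroup.toGroup act_rels

theorem ψ_sg (i : Fin m) : ψ m (sg i) = act i := PresentedGroup.toGroup.of act_rels

/-- natural-number indexed generators -/
def sn (m i : ℕ) : BG m := if h : i < m then PresentedGroup.of ⟨i, h⟩ else 1

theorem ψ_form (x : BG m) : ∃ (π : Equiv.Perm ℕ) (k : ℕ → ℕ → ℤ), ∀ a b t,
    ψ m x (a, b, t) = (π a, π b, t + k a b) := by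
  have hx : x ∈ Subgroup.closure (Set.range (PresentedGroup.of (rels := braidRels m))) := by
    rw [PresentedGroup.closure_range_of]; trivial
  induction hx using Subgroup.closure_induction with
  | mem x hx =>
    obtain ⟨i, rfl⟩ := hx
    refine ⟨⟨sw i, sw i, sw_sw i, sw_sw i⟩, cr i, fun a b t => ?_⟩
    rw [ψ_sg]
    rfl
  | one => exact ⟨1, 0, fun a b t => by simp⟩
  | mul x y _ _ ihx ihy =>
    obtain ⟨π, k, h⟩ := ihx
    obtain ⟨π', k', h'⟩ := ihy
    refine ⟨π * π', fun a b => k' a b + k (π' a) (π' b), fun a b t => ?_⟩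
    rw [map_mul, Equiv.Perm.mul_apply, h', h, add_assoc]
    rfl
  | inv x _ ih =>
    obtain ⟨π, k, h⟩ := ih
    refine ⟨π⁻¹, fun a b => - k (π⁻¹ a) (π⁻¹ b), fun a b t => ?_⟩
    rw [map_inv, Equiv.Perm.inv_eq_iff_eq, h]
    simp

theorem ψ_rho (k : ℕ) (hk : k ≤ m) (a b : ℕ) (t : ℤ) :
    ψ m (pr (sn m) k) (a, b, t) =
      (if a < k then a + 1 else if a = k then 0 else a,
       if b < k then b + 1 else if b = k then 0 else b,
       t + if a < k ∧ b = k then 1 else 0) := by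
  induction k generalizing a b t with
  | zero =>
    simp [pr_zero]
  | succ k ih =>
    have hk' : k < m := by omega
    have e : ψ m (sn m k) = act k := by
      simp only [sn, hk', dif_pos]
      exact ψ_sg _
    rw [pr_succ, map_mul, Equiv.Perm.mul_apply, e, act_apply, ih (by omega)]
    simp only [Prod.mk.injEq, sw, cr]
    refine ⟨?_, ?_, ?_⟩
    · split_ifs <;> omega
    · split_ifs <;> omega
    · split_ifs <;> omega

theorem ψ_twist (hm : 2 ≤ m) (t : ℤ) : ψ m (pr (sn m) m ^ (m + 1)) (0, 1, t) = (0, 1, t + 1) := by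
  have h1 : ∀ j, j + 1 ≤ m → ψ m (pr (sn m) m ^ j) (0, 1, t) = (j, j + 1, t) := by
    intro j
    induction j with
    | zero => intro _; simp
    | succ j ih =>
      intro hj
      rw [pow_succ', map_mul, Equiv.Perm.mul_apply, ih (by omega), ψ_rho m le_rfl]
      have h1 : j < m := by omega
      have h2 : j + 1 < m := by omega
      have h3 : j + 1 ≠ m := by omega
      simp [h1, h2, h3]
  obtain ⟨k, rfl⟩ : ∃ k, m = k + 1 := ⟨m - 1, by omega⟩
  rw [pow_succ', pow_succ', map_mul, map_mul, Equiv.Perm.mul_apply, Equiv.Perm.mul_apply,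
    h1 k le_rfl, ψ_rho _ le_rfl, ψ_rho _ le_rfl]
  simp

theorem ψ_zpow {x : BG m} {k : ℤ} (h : ∀ t, ψ m x (0, 1, t) = (0, 1, t + k)) (e : ℤ) (t : ℤ) :
    ψ m (x ^ e) (0, 1, t) = (0, 1, t + e * k) := by
  induction e using Int.induction_on generalizing t with
  | zero => simp
  | succ e ih =>
    rw [zpow_add_one, map_mul, Equiv.Perm.mul_apply, h, ih]
    congr 2
    ring
  | pred e ih =>
    rw [zpow_sub_one, map_mul, map_inv, Equiv.Perm.mul_apply]
    have : (ψ m x)⁻¹ (0, 1, t) = (0, 1, t - k) := by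
      rw [Equiv.Perm.inv_eq_iff_eq, h]
      simp
    rw [this, ih]
    congr 2
    ring

theorem ψ_center (hm : 2 ≤ m) {x : BG m} (hx : x ∈ Subgroup.center (BG m)) :
    ∃ k : ℤ, ∀ t, ψ m x (0, 1, t) = (0, 1, t + k) := by
  obtain ⟨π, k, h⟩ := ψ_form x
  rw [Subgroup.mem_center_iff] at hx
  have hc : ∀ i, i < m → ∀ a, sw i (π a) = π (sw i a) := by
    intro i hi a
    have h1 := congrArg (fun y => (ψ m y (a, a, 0)).1) (hx (sg ⟨i, hi⟩))
    simpa only [map_mul, Equiv.Perm.mul_apply, h, ψ_sg, act_apply] using h1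
  have h0 := hc 0 (by omega) 0
  have h1 := hc 1 (by omega) 0
  have hne : π 0 ≠ π 1 := fun h => by simpa using π.injective h
  have e1 : sw 0 0 = 1 := rfl
  have e2 : sw 1 0 = 0 := rfl
  rw [e1] at h0
  rw [e2] at h1
  have p0 : π 0 = 0 := by
    unfold sw at h0 h1
    split_ifs at h0 h1 <;> omega
  have p1 : π 1 = 1 := by
    rw [← h0, p0, e1]
  refine ⟨k 0 1, fun t => ?_⟩
  rw [h, p0, p1]

theorem toG_Z : toG m (Z m) = pr (sn m) m ^ (m + 1) := by
  rw [Z, map_pow, pr, pr, map_list_prod, List.map_map]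
  congr 3
  funext i
  simp only [Function.comp, gn, sn]
  split_ifs
  · exact toG_g _
  · exact map_one _

theorem main (hm : 2 ≤ m) :
    Subgroup.center (BG m) = Subgroup.zpowers (pr (sn m) m ^ (m + 1)) ∧
    (∀ k : ℤ, (pr (sn m) m ^ (m + 1)) ^ k = 1 → k = 0) := by
  have hz : ∀ t, ψ m (pr (sn m) m ^ (m + 1)) (0, 1, t) = (0, 1, t + 1) := ψ_twist hm
  have hzc : pr (sn m) m ^ (m + 1) ∈ Subgroup.center (BG m) := by
    rw [Subgroup.mem_center_iff, ← toG_Z]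
    exact fun x => (zG_comm x).symm
  constructor
  · obtain ⟨d, hd⟩ := center_le (m := m) (by omega)
    have hcyc : IsCyclic (Subgroup.center (BG m)) :=
      isCyclic_of_injective (Subgroup.inclusion hd) (Subgroup.inclusion_injective hd)
    obtain ⟨c, hc⟩ := (Subgroup.isCyclic_iff_exists_zpowers_eq_top _).1 hcyc
    have hcc : c ∈ Subgroup.center (BG m) := by
      rw [← hc]; exact Subgroup.mem_zpowers c
    obtain ⟨k, hk⟩ := ψ_center hm hcc
    have hzc' := hzc
    rw [← hc] at hzc'
    obtain ⟨e, he⟩ := Subgroup.mem_zpowers_iff.1 hzc'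
    have h1 := ψ_zpow hk e 0
    rw [he, hz] at h1
    simp only [Prod.mk.injEq, zero_add, true_and] at h1
    rw [← hc, ← he]
    rcases Int.isUnit_iff.1 (IsUnit.of_mul_eq_one _ h1.symm) with rfl | rfl
    · simp
    · simp
  · intro k hk
    have h1 := ψ_zpow hz k 0
    rw [hk] at h1
    simpa using h1.symm

end BM

/-- For `n ≥ 3`, the center of the braid group `B_n` is infinite cyclic,
generated by the full twist `z_n = (σ_1 ⋯ σ_{n-1})^n`. -/
theorem center_braidGroup (n : ℕ) (hn : 3 ≤ n) :
    Subgroup.center (BraidGroup n) = Subgroup.zpowers (fullTwist n) ∧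
    (∀ k : ℤ, fullTwist n ^ k = 1 → k = 0) := by
  obtain ⟨m, rfl⟩ : ∃ m, n = m + 1 := ⟨n - 1, by omega⟩
  exact BM.main (m := m) (by omega)
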